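/- Let f(t) = exp(−1/t²) for t > 0 and f(t) = 0 for t ≤ 0. Then the series v(x,t) = Σ_{n=0}^∞ f^{(n)}(t/2) x^{2n+1}/(2n+1)! converges for all (x,t) with t > 0, defines a smooth solution of v_t = ½v_{xx}, satisfies v(0,t) = 0 for all t and v(x,t) → 0 as t → 0⁺ for each x, but v is not identically zero. -/

import Mathlib

/-- The flat function f(t) = exp(−1/t²) for t > 0 and f(t) = 0 for t ≤ 0. -/
noncomputable def flatF (t : ℝ) : ℝ := if 0 < t then Real.exp (-1 / t ^ 2) else 0

/-- The Tychonoff-type series v(x,t) = Σₙ f⁽ⁿ⁾(t/2) x^{2n+1}/(2n+1)!. -/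
noncomputable def vTychonoff (x t : ℝ) : ℝ :=
  ∑' n : ℕ, iteratedDeriv n flatF (t / 2) * x ^ (2 * n + 1) / ((2 * n + 1).factorial : ℝ)

/-!
For real-analytic `g` the Cauchy estimates `‖g⁽ⁿ⁾‖ ≤ M Cⁿ n!` hold locally uniformly, and
`n! / (2n+1)! ≤ 1 / n!`, so `∑ₙ g⁽ⁿ⁾(t) x²ⁿ⁺¹ / (2n+1)!` and its derivatives are dominated by
exponential series. Hence the sum is smooth and may be differentiated termwise, and two
`x`-derivatives shift the series by one index exactly as one `t`-derivative does. The time change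
`t ↦ t / 2` produces the factor `½`, and the `x`-derivative at `x = 0` recovers `g(t)`, so the
solution vanishes only if `g` does.

For the flat function, Cauchy's estimate for `exp (-1 / z²)` on the disc of radius `t / 4` about `t`
gives `M = exp (-1 / (8 t²))` and `C = 4 / t`. The sum is then at most
`|x| exp (4 x² / t - 1 / (8 t²))`, which tends to `0` as `t → 0⁺`.
-/

open Filter Topology Set
open scoped Nat NNReal ENNReal ContDiff

section CauchyEstimates

variable {𝕜 E F : Type*} [NontriviallyNormedField 𝕜] [NormedAddCommGroup E] [NormedSpace 𝕜 E]
  [NormedAddCommGroup F] [NormedSpace 𝕜 F]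

theorem exists_nnnorm_changeOrigin_mul_pow_le (p : FormalMultilinearSeries 𝕜 E F) {r r' : ℝ≥0}
    (hr : (r + r' : ℝ≥0∞) < p.radius) :
    ∃ M : ℝ≥0, ∀ y : E, ‖y‖₊ ≤ r → ∀ k, ‖p.changeOrigin y k‖₊ * r' ^ k ≤ M := by
  have hsum := NNReal.summable_sigma.1 (p.changeOriginSeries_summable_aux₁ hr)
  refine ⟨_, fun y hy k => le_trans ?_ (hsum.2.le_tsum' k)⟩
  dsimp only
  have hr_lt : (r : ℝ≥0∞) < p.radius := le_self_add.trans_lt hr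
  have hy_lt : (‖y‖₊ : ℝ≥0∞) < p.radius := (ENNReal.coe_le_coe.2 hy).trans_lt hr_lt
  rw [NNReal.tsum_mul_right]
  gcongr
  refine (p.nnnorm_changeOrigin_le k hy_lt).trans
    (Summable.tsum_le_tsum (fun s => ?_) (p.changeOriginSeries_summable_aux₂ hy_lt k)
      (p.changeOriginSeries_summable_aux₂ hr_lt k))
  gcongr

theorem norm_iteratedDeriv_le_of_hasFPowerSeriesOnBall [CompleteSpace F] {f : 𝕜 → F} {x : 𝕜}
    {p : FormalMultilinearSeries 𝕜 𝕜 F} {r : ℝ≥0∞} (hf : HasFPowerSeriesOnBall f p x r) (n : ℕ) :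
    ‖iteratedDeriv n f x‖ ≤ n ! * ‖p n‖ := by
  rw [iteratedDeriv_eq_iteratedFDeriv, ← hf.factorial_smul 1 n]
  refine (norm_nsmul_le ..).trans ?_
  gcongr
  exact ((p n).le_opNorm fun _ => 1).trans_eq (by simp)

theorem exists_eventually_norm_iteratedDeriv_le [CompleteSpace F] {f : 𝕜 → F} {x : 𝕜}
    (hf : AnalyticAt 𝕜 f x) :
    ∃ M C : ℝ, ∀ᶠ y in 𝓝 x, ∀ n, ‖iteratedDeriv n f y‖ ≤ M * C ^ n * n ! := by
  obtain ⟨p, R, hp⟩ := hf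
  obtain ⟨ρ, hρ_pos, hρR⟩ := ENNReal.lt_iff_exists_nnreal_btwn.1 hp.r_pos
  have hρ : 0 < ρ / 2 := half_pos (ENNReal.coe_pos.1 hρ_pos)
  obtain ⟨M, hM⟩ := exists_nnnorm_changeOrigin_mul_pow_le p (r := ρ / 2) (r' := ρ / 2) <| by
    rw [← ENNReal.coe_add, add_halves]
    exact hρR.trans_le hp.r_le
  refine ⟨M, ((ρ / 2 : ℝ≥0) : ℝ)⁻¹, ?_⟩
  filter_upwards [Metric.closedBall_mem_nhds x (NNReal.coe_pos.2 hρ)] with y hy n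
  have hyx : ‖y - x‖₊ ≤ ρ / 2 := mem_closedBall_iff_norm.1 hy
  have hyR : (‖y - x‖₊ : ℝ≥0∞) < R :=
    (ENNReal.coe_le_coe.2 (hyx.trans (half_le_self ρ.2))).trans_lt hρR
  have hpy := hp.changeOrigin hyR
  rw [add_sub_cancel] at hpy
  have hcoeff : ‖p.changeOrigin (y - x) n‖ ≤ M * ((ρ / 2 : ℝ≥0) : ℝ)⁻¹ ^ n := by
    rw [inv_pow, ← div_eq_mul_inv, le_div_iff₀ (pow_pos (NNReal.coe_pos.2 hρ) n)]
    exact_mod_cast hM (y - x) hyx n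
  calc ‖iteratedDeriv n f y‖ ≤ n ! * ‖p.changeOrigin (y - x) n‖ :=
        norm_iteratedDeriv_le_of_hasFPowerSeriesOnBall hpy n
    _ ≤ n ! * (M * ((ρ / 2 : ℝ≥0) : ℝ)⁻¹ ^ n) := by gcongr
    _ = M * ((ρ / 2 : ℝ≥0) : ℝ)⁻¹ ^ n * n ! := mul_comm _ _

theorem hasDerivAt_iteratedDeriv [CompleteSpace F] {f : 𝕜 → F} {x : 𝕜} (n : ℕ)
    (hf : AnalyticAt 𝕜 f x) :
    HasDerivAt (iteratedDeriv n f) (iteratedDeriv (n + 1) f x) x := by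
  rw [iteratedDeriv_succ, iteratedDeriv_eq_iterate]
  exact (hf.iterated_deriv n).differentiableAt.hasDerivAt

theorem iteratedDeriv_re_comp_ofReal {f : ℂ → ℂ} (n : ℕ) {t : ℝ} (hf : AnalyticAt ℂ f t) :
    iteratedDeriv n (fun s : ℝ => (f s).re) t = (iteratedDeriv n f t).re := by
  induction n generalizing t with
  | zero => simp only [iteratedDeriv_zero]
  | succ n ih =>
    rw [iteratedDeriv_succ, ← (hasDerivAt_iteratedDeriv n hf).real_of_complex.deriv]
    apply EventuallyEq.deriv_eq
    filter_upwards [Complex.continuous_ofReal.continuousAt.eventually hf.eventually_analyticAt]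
      with s hs using ih hs

theorem abs_iteratedDeriv_re_comp_ofReal_le {f : ℂ → ℂ} {t R C : ℝ} (n : ℕ) (hR : 0 < R)
    (hf : DiffContOnCl ℂ f (Metric.ball t R)) (hC : ∀ z ∈ Metric.sphere (t : ℂ) R, ‖f z‖ ≤ C) :
    |iteratedDeriv n (fun s : ℝ => (f s).re) t| ≤ n ! * C / R ^ n := by
  have hanalytic : AnalyticAt ℂ f t :=
    hf.differentiableOn.analyticAt (Metric.ball_mem_nhds _ hR)
  rw [iteratedDeriv_re_comp_ofReal n hanalytic]
  exact (Complex.abs_re_le_norm _).trans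
    (Complex.norm_iteratedDeriv_le_of_forall_mem_sphere_norm_le n hR hf hC)

end CauchyEstimates

section HeatSeries

variable {E : Type*} [NormedAddCommGroup E] [NormedSpace ℝ E]

/-- The `n`-th term `x ^ (2n+p) / (2n+p)! • g⁽ⁿ⁾(t)` of `heatSeries g p`, at `q = (x, t)`. -/
noncomputable def heatTerm (g : ℝ → E) (p n : ℕ) (q : ℝ × ℝ) : E :=
  (q.1 ^ (2 * n + p) / (2 * n + p)! : ℝ) • iteratedDeriv n g q.2

/-- Tychonoff's series `∑ₙ x ^ (2n+p) / (2n+p)! • g⁽ⁿ⁾(t)` at `q = (x, t)`. For `p = 0` and `p = 1`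
it is the formal solution of `u_t = u_xx` with Cauchy data `(u, u_x) = (g, 0)`, respectively
`(0, g)`, on the line `x = 0`. Other values of `p` are allowed because differentiating in `x` lowers
`p` by one. -/
noncomputable def heatSeries (g : ℝ → E) (p : ℕ) (q : ℝ × ℝ) : E :=
  ∑' n, heatTerm g p n q

variable {g : ℝ → E} {p n : ℕ} {q : ℝ × ℝ} {M C R : ℝ}

theorem factorial_mul_self_le_factorial_two_mul_add (n p : ℕ) : n ! * n ! ≤ (2 * n + p)! :=
  calc n ! * n ! ≤ (n + n)! :=
        Nat.le_of_dvd (Nat.factorial_pos _) (Nat.factorial_mul_factorial_dvd_factorial_add n n)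
    _ ≤ (2 * n + p)! := Nat.factorial_le (by omega)

theorem norm_heatTerm_le (hq : |q.1| ≤ R) (hg : ‖iteratedDeriv n g q.2‖ ≤ M * C ^ n * n !) :
    ‖heatTerm g p n q‖ ≤ M * R ^ p * ((C * R ^ 2) ^ n / n !) := by
  have hfact : (n ! * n ! : ℝ) ≤ (2 * n + p)! :=
    mod_cast factorial_mul_self_le_factorial_two_mul_add n p
  have hR : 0 ≤ R := (abs_nonneg _).trans hq
  calc ‖heatTerm g p n q‖ = |q.1| ^ (2 * n + p) / (2 * n + p)! * ‖iteratedDeriv n g q.2‖ := by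
        rw [heatTerm, norm_smul, norm_div, norm_pow, Real.norm_eq_abs, RCLike.norm_natCast]
    _ ≤ R ^ (2 * n + p) / (n ! * n !) * (M * C ^ n * n !) := by gcongr
    _ = M * R ^ p * ((C * R ^ 2) ^ n / n !) := by
        field_simp
        ring

theorem norm_heatSeries_le (hg : ∀ n, ‖iteratedDeriv n g q.2‖ ≤ M * C ^ n * n !) :
    ‖heatSeries g p q‖ ≤ M * |q.1| ^ p * Real.exp (C * |q.1| ^ 2) := by
  have hexp : HasSum (fun n => (C * |q.1| ^ 2) ^ n / n !) (Real.exp (C * |q.1| ^ 2)) := by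
    rw [Real.exp_eq_exp_ℝ]
    exact NormedSpace.expSeries_div_hasSum_exp _
  exact tsum_of_norm_bounded (hexp.mul_left _) fun n => norm_heatTerm_le le_rfl (hg n)

theorem heatSeries_succ_zero_left (g : ℝ → E) (p : ℕ) (t : ℝ) :
    heatSeries g (p + 1) (0, t) = 0 := by
  simp [heatSeries, heatTerm]

theorem hasDerivAt_pow_succ_div_factorial {𝕜 : Type*} [NontriviallyNormedField 𝕜] [CharZero 𝕜]
    (m : ℕ) (x : 𝕜) : HasDerivAt (fun y : 𝕜 => y ^ (m + 1) / (m + 1)!) (x ^ m / m !) x := by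
  refine ((hasDerivAt_pow (m + 1) x).div_const _).congr_deriv ?_
  have hm : (m ! : 𝕜) ≠ 0 := mod_cast m.factorial_ne_zero
  have hm' : (m + 1 : 𝕜) ≠ 0 := mod_cast m.succ_ne_zero
  rw [Nat.factorial_succ]
  push_cast
  field_simp

variable [CompleteSpace E]

theorem hasFDerivAt_heatTerm_succ (p n : ℕ) (hg : AnalyticAt ℝ g q.2) :
    HasFDerivAt (heatTerm g (p + 1) n)
      ((ContinuousLinearMap.fst ℝ ℝ ℝ).smulRight (heatTerm g p n q) +
        (ContinuousLinearMap.snd ℝ ℝ ℝ).smulRight (heatTerm (deriv g) (p + 1) n q)) q := by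
  have hpow := (hasDerivAt_pow_succ_div_factorial (2 * n + p) q.1).comp_hasFDerivAt q
    (hasFDerivAt_fst (𝕜 := ℝ))
  have hiter : HasDerivAt (iteratedDeriv n g) (iteratedDeriv n (deriv g) q.2) q.2 := by
    rw [← iteratedDeriv_succ']
    exact hasDerivAt_iteratedDeriv n hg
  refine (hpow.smul (hiter.hasFDerivAt.comp q hasFDerivAt_snd)).congr_fderiv ?_
  ext <;> simp [heatTerm, add_assoc]

theorem summable_heatTerm (p : ℕ) (hg : AnalyticAt ℝ g q.2) :
    Summable fun n => heatTerm g p n q := by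
  obtain ⟨M, C, hMC⟩ := exists_eventually_norm_iteratedDeriv_le hg
  exact .of_norm_bounded ((Real.summable_pow_div_factorial _).mul_left _)
    fun n => norm_heatTerm_le le_rfl (hMC.self_of_nhds n)

theorem hasFDerivAt_heatSeries_succ (p : ℕ) (hg : AnalyticAt ℝ g q.2) :
    HasFDerivAt (heatSeries g (p + 1))
      ((ContinuousLinearMap.fst ℝ ℝ ℝ).smulRight (heatSeries g p q) +
        (ContinuousLinearMap.snd ℝ ℝ ℝ).smulRight (heatSeries (deriv g) (p + 1) q)) q := by
  obtain ⟨M, C, hMC⟩ := exists_eventually_norm_iteratedDeriv_le hg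
  obtain ⟨M', C', hMC'⟩ := exists_eventually_norm_iteratedDeriv_le hg.deriv
  obtain ⟨δ, hδ, hball⟩ := Metric.eventually_nhds_iff_ball.1
    (hg.eventually_analyticAt.and (hMC.and hMC'))
  obtain ⟨R, hqR⟩ := exists_gt |q.1|
  have hq : q ∈ Metric.ball (0 : ℝ) R ×ˢ Metric.ball q.2 δ :=
    ⟨mem_ball_zero_iff.2 hqR, Metric.mem_ball_self hδ⟩
  have hbound := ((Real.summable_pow_div_factorial (C * R ^ 2)).mul_left (M * R ^ p)).add
    ((Real.summable_pow_div_factorial (C' * R ^ 2)).mul_left (M' * R ^ (p + 1)))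
  have hfst := (summable_heatTerm p hg).hasSum.mapL
    (ContinuousLinearMap.smulRightL ℝ (ℝ × ℝ) E (.fst ℝ ℝ ℝ))
  have hsnd := (summable_heatTerm (p + 1) hg.deriv).hasSum.mapL
    (ContinuousLinearMap.smulRightL ℝ (ℝ × ℝ) E (.snd ℝ ℝ ℝ))
  refine (hasFDerivAt_tsum_of_isPreconnected hbound (Metric.isOpen_ball.prod Metric.isOpen_ball)
    ((convex_ball 0 R).prod (convex_ball q.2 δ)).isPreconnected
    (fun n y hy => hasFDerivAt_heatTerm_succ p n (hball y.2 hy.2).1) (fun n y hy => ?_) hq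
    (summable_heatTerm (p + 1) hg) hq).congr_fderiv (hfst.add hsnd).tsum_eq
  have hyR : |y.1| ≤ R := (mem_ball_zero_iff.1 hy.1).le
  obtain ⟨-, hg_bound, hg'_bound⟩ := hball y.2 hy.2
  refine norm_add_le_of_le ?_ ?_ <;> rw [ContinuousLinearMap.norm_smulRight_apply]
  · exact (mul_le_of_le_one_left (norm_nonneg _) (ContinuousLinearMap.norm_fst_le ..)).trans
      (norm_heatTerm_le hyR (hg_bound n))
  · exact (mul_le_of_le_one_left (norm_nonneg _) (ContinuousLinearMap.norm_snd_le ..)).trans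
      (norm_heatTerm_le hyR (hg'_bound n))

-- The constant-in-`x` term is split off so that differentiating in `x` truncates no exponent.
theorem heatSeries_zero (hg : AnalyticAt ℝ g q.2) :
    heatSeries g 0 q = g q.2 + heatSeries (deriv g) 2 q := by
  rw [heatSeries, (summable_heatTerm 0 hg).tsum_eq_zero_add, heatSeries]
  simp [heatTerm, iteratedDeriv_succ', mul_add]

theorem eventually_analyticAt_snd (hg : AnalyticAt ℝ g q.2) : ∀ᶠ q' in 𝓝 q, AnalyticAt ℝ g q'.2 :=
  continuous_snd.continuousAt.eventually hg.eventually_analyticAt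

theorem contDiffAt_heatSeries_of_forall_succ {m : ℕ∞} (hg : AnalyticAt ℝ g q.2)
    (hsucc : ∀ (p : ℕ) (g : ℝ → E), AnalyticAt ℝ g q.2 → ContDiffAt ℝ m (heatSeries g (p + 1)) q)
    (p : ℕ) : ContDiffAt ℝ m (heatSeries g p) q := by
  cases p with
  | zero =>
    exact ((hg.contDiffAt.comp q contDiffAt_snd).add (hsucc 1 _ hg.deriv)).congr_of_eventuallyEq
      ((eventually_analyticAt_snd hg).mono fun _ => heatSeries_zero)
  | succ p => exact hsucc p g hg

theorem contDiffAt_heatSeries_succ (k p : ℕ) (hg : AnalyticAt ℝ g q.2) :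
    ContDiffAt ℝ k (heatSeries g (p + 1)) q := by
  induction k generalizing g p with
  | zero =>
    exact contDiffAt_zero.2 ⟨_, eventually_analyticAt_snd hg, fun q' hq' =>
      (hasFDerivAt_heatSeries_succ p hq').continuousAt.continuousWithinAt⟩
  | succ k ih =>
    refine contDiffAt_succ_iff_hasFDerivAt.2
      ⟨_, ⟨_, eventually_analyticAt_snd hg, fun q' hq' => hasFDerivAt_heatSeries_succ p hq'⟩, ?_⟩
    have hall {g : ℝ → E} (hg : AnalyticAt ℝ g q.2) (p : ℕ) : ContDiffAt ℝ k (heatSeries g p) q :=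
      contDiffAt_heatSeries_of_forall_succ hg (fun p g hg => ih p hg) p
    exact (contDiffAt_const.smulRight (hall hg p)).add
      (contDiffAt_const.smulRight (hall hg.deriv (p + 1)))

theorem contDiffAt_heatSeries (p : ℕ) (hg : AnalyticAt ℝ g q.2) :
    ContDiffAt ℝ ∞ (heatSeries g p) q :=
  contDiffAt_infty.2 fun k =>
    contDiffAt_heatSeries_of_forall_succ hg (fun p _ hg => contDiffAt_heatSeries_succ k p hg) p

theorem hasDerivAt_heatSeries_succ_left (p : ℕ) (x : ℝ) {t : ℝ} (hg : AnalyticAt ℝ g t) :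
    HasDerivAt (fun y => heatSeries g (p + 1) (y, t)) (heatSeries g p (x, t)) x := by
  have hcurve : HasDerivAt (fun y : ℝ => (y, t)) (1, 0) x :=
    (hasDerivAt_id x).prodMk (hasDerivAt_const x t)
  refine ((hasFDerivAt_heatSeries_succ (q := (x, t)) p hg).comp_hasDerivAt x hcurve).congr_deriv ?_
  simp

theorem hasDerivAt_heatSeries_zero_left (x : ℝ) {t : ℝ} (hg : AnalyticAt ℝ g t) :
    HasDerivAt (fun y => heatSeries g 0 (y, t)) (heatSeries (deriv g) 1 (x, t)) x := by
  simp_rw [heatSeries_zero (q := (_, t)) hg]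
  exact (hasDerivAt_heatSeries_succ_left 1 x hg.deriv).const_add _

theorem hasDerivAt_heatSeries_succ_right (p : ℕ) (x : ℝ) {t : ℝ} (hg : AnalyticAt ℝ g t) :
    HasDerivAt (fun s => heatSeries g (p + 1) (x, s)) (heatSeries (deriv g) (p + 1) (x, t)) t := by
  have hcurve : HasDerivAt (fun s : ℝ => (x, s)) (0, 1) t :=
    (hasDerivAt_const t x).prodMk (hasDerivAt_id t)
  refine ((hasFDerivAt_heatSeries_succ (q := (x, t)) p hg).comp_hasDerivAt t hcurve).congr_deriv ?_
  simp

theorem deriv_deriv_heatSeries_one_left (x : ℝ) {t : ℝ} (hg : AnalyticAt ℝ g t) :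
    deriv (deriv fun y => heatSeries g 1 (y, t)) x = heatSeries (deriv g) 1 (x, t) := by
  have hderiv : (deriv fun y => heatSeries g 1 (y, t)) = fun y => heatSeries g 0 (y, t) :=
    funext fun y => (hasDerivAt_heatSeries_succ_left 0 y hg).deriv
  rw [hderiv, (hasDerivAt_heatSeries_zero_left x hg).deriv]

theorem exists_heatSeries_one_ne_zero {t : ℝ} (hg : AnalyticAt ℝ g t) (hgt : g t ≠ 0) :
    ∃ x, heatSeries g 1 (x, t) ≠ 0 := by
  by_contra! hzero
  have hderiv := (hasDerivAt_heatSeries_succ_left 0 0 hg).deriv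
  simp only [zero_add, hzero, deriv_const] at hderiv
  rw [heatSeries_zero hg, heatSeries_succ_zero_left, add_zero] at hderiv
  exact hgt hderiv.symm

end HeatSeries

section FlatFunction

theorem flatF_eventuallyEq {t : ℝ} (ht : 0 < t) :
    flatF =ᶠ[𝓝 t] fun s => Real.exp (-1 / s ^ 2) :=
  (eventually_gt_nhds ht).mono fun _ hs => if_pos hs

theorem analyticAt_flatF {t : ℝ} (ht : 0 < t) : AnalyticAt ℝ flatF t := by
  have hexp : AnalyticAt ℝ (fun s : ℝ => Real.exp (-1 / s ^ 2)) t := by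
    fun_prop (disch := positivity)
  exact hexp.congr (flatF_eventuallyEq ht).symm

-- On this disc `|arg z| < π / 4`, the sector where `z⁻²` has positive real part.
theorem one_div_eight_mul_sq_le_re_inv_sq {t : ℝ} (ht : 0 < t) {z : ℂ}
    (hz : z ∈ Metric.closedBall (t : ℂ) (t / 4)) : 1 / (8 * t ^ 2) ≤ ((z ^ 2)⁻¹).re := by
  have hdist := mem_closedBall_iff_norm.1 hz
  obtain ⟨hre_lower, hre_upper⟩ := abs_le.1 ((Complex.abs_re_le_norm _).trans hdist)
  obtain ⟨him_lower, him_upper⟩ := abs_le.1 ((Complex.abs_im_le_norm _).trans hdist)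
  simp only [Complex.sub_re, Complex.sub_im, Complex.ofReal_re, Complex.ofReal_im, sub_zero]
    at hre_lower hre_upper him_lower him_upper
  have hre_pos : 0 < z.re := by linarith
  have hsq_re : t ^ 2 / 2 ≤ (z ^ 2).re := by
    rw [pow_two z, Complex.mul_re]
    nlinarith
  have hnormSq : Complex.normSq z ≤ 2 * t ^ 2 := by
    rw [Complex.normSq_apply]
    nlinarith
  have hnormSq_pos : 0 < Complex.normSq z :=
    Complex.normSq_pos.2 fun h => hre_pos.ne' (by simp [h])
  have hsq_re_nonneg : 0 ≤ (z ^ 2).re := le_trans (by positivity) hsq_re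
  calc 1 / (8 * t ^ 2) = (t ^ 2 / 2) / (2 * t ^ 2) ^ 2 := by field_simp; norm_num
    _ ≤ (z ^ 2).re / Complex.normSq z ^ 2 := by gcongr
    _ = ((z ^ 2)⁻¹).re := by rw [Complex.inv_re, map_pow]

theorem norm_exp_neg_one_div_sq_le {t : ℝ} (ht : 0 < t) {z : ℂ}
    (hz : z ∈ Metric.closedBall (t : ℂ) (t / 4)) :
    ‖Complex.exp (-1 / z ^ 2)‖ ≤ Real.exp (-1 / (8 * t ^ 2)) := by
  rw [Complex.norm_exp, neg_div, neg_div, Complex.neg_re, one_div (z ^ 2)]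
  gcongr
  exact one_div_eight_mul_sq_le_re_inv_sq ht hz

theorem abs_iteratedDeriv_flatF_le (n : ℕ) {t : ℝ} (ht : 0 < t) :
    |iteratedDeriv n flatF t| ≤ Real.exp (-1 / (8 * t ^ 2)) * (4 / t) ^ n * n ! := by
  have hre : flatF =ᶠ[𝓝 t] fun s : ℝ => (Complex.exp (-1 / (s : ℂ) ^ 2)).re := by
    filter_upwards [flatF_eventuallyEq ht] with s hs
    rw [hs, ← Complex.exp_ofReal_re]
    push_cast
    rfl
  have hdiff : DiffContOnCl ℂ (fun z : ℂ => Complex.exp (-1 / z ^ 2)) (Metric.ball t (t / 4)) := by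
    refine DifferentiableOn.diffContOnCl fun z hz => DifferentiableAt.differentiableWithinAt ?_
    have hz0 : z ^ 2 ≠ 0 := by
      intro h
      have hle := one_div_eight_mul_sq_le_re_inv_sq ht (Metric.closure_ball_subset_closedBall hz)
      rw [h, inv_zero, Complex.zero_re] at hle
      exact hle.not_gt (by positivity)
    fun_prop (disch := exact hz0)
  rw [hre.iteratedDeriv_eq n]
  refine (abs_iteratedDeriv_re_comp_ofReal_le n (by positivity) hdiff fun z hz =>
    norm_exp_neg_one_div_sq_le ht (Metric.sphere_subset_closedBall hz)).trans_eq ?_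
  rw [div_eq_mul_inv, ← inv_pow, inv_div]
  ring

theorem tendsto_exp_mul_exp_inv_nhdsGT_zero {c : ℝ} (hc : 0 < c) (b : ℝ) :
    Tendsto (fun t : ℝ => Real.exp (-c * t⁻¹ ^ 2) * Real.exp (b * t⁻¹)) (𝓝[>] 0) (𝓝 0) := by
  have hquad : Tendsto (fun u : ℝ => u * (b + -c * u)) atTop atBot :=
    tendsto_id.atTop_mul_atBot₀
      (tendsto_atBot_add_const_left _ _ (tendsto_id.const_mul_atTop_of_neg (neg_neg_of_pos hc)))
  refine (Real.tendsto_exp_atBot.comp (hquad.comp tendsto_inv_nhdsGT_zero)).congr fun t => ?_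
  rw [← Real.exp_add]
  simp only [Function.comp_apply]
  ring_nf

theorem tendsto_heatSeries_flatF_nhdsGT_zero (p : ℕ) (x : ℝ) :
    Tendsto (fun t => heatSeries flatF p (x, t)) (𝓝[>] 0) (𝓝 0) := by
  have hmajorant := (tendsto_exp_mul_exp_inv_nhdsGT_zero (c := 1 / 8) (by norm_num)
    (4 * |x| ^ 2)).mul_const (|x| ^ p)
  rw [zero_mul] at hmajorant
  refine squeeze_zero_norm' ?_ hmajorant
  filter_upwards [self_mem_nhdsWithin] with t ht
  refine (norm_heatSeries_le fun n => abs_iteratedDeriv_flatF_le n ht).trans_eq ?_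
  ring_nf

theorem vTychonoff_eq_heatSeries (x t : ℝ) : vTychonoff x t = heatSeries flatF 1 (x, t / 2) :=
  tsum_congr fun n => by rw [heatTerm, smul_eq_mul]; ring

end FlatFunction

/-- the series Σₙ f⁽ⁿ⁾(t/2) x^{2n+1}/(2n+1)! converges for all
(x,t) with t > 0, defines a smooth solution of v_t = ½ v_{xx}, vanishes at x = 0
for all t and as t → 0⁺ for each x, but is not identically zero. -/
theorem vTychonoff_nonuniqueness :
    (∀ x t : ℝ, 0 < t →
      Summable (fun n : ℕ =>
        iteratedDeriv n flatF (t / 2) * x ^ (2 * n + 1) / ((2 * n + 1).factorial : ℝ))) ∧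
    ContDiffOn ℝ (⊤ : ℕ∞) (fun q : ℝ × ℝ => vTychonoff q.1 q.2) {q : ℝ × ℝ | 0 < q.2} ∧
    (∀ x t : ℝ, 0 < t →
      deriv (fun s => vTychonoff x s) t =
        (1 / 2) * deriv (deriv (fun y => vTychonoff y t)) x) ∧
    (∀ t : ℝ, vTychonoff 0 t = 0) ∧
    (∀ x : ℝ, Filter.Tendsto (fun t => vTychonoff x t)
      (nhdsWithin 0 (Set.Ioi 0)) (nhds 0)) ∧
    (∃ x t : ℝ, 0 < t ∧ vTychonoff x t ≠ 0) := by
  have hflat {t : ℝ} (ht : 0 < t) : AnalyticAt ℝ flatF (t / 2) := analyticAt_flatF (half_pos ht)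
  simp only [vTychonoff_eq_heatSeries]
  refine ⟨fun x t ht => ?_, fun q hq => ?_, fun x t ht => ?_,
    fun t => heatSeries_succ_zero_left flatF 0 (t / 2), fun x => ?_, ?_⟩
  · refine (summable_heatTerm (q := (x, t / 2)) 1 (hflat ht)).congr fun n => ?_
    rw [heatTerm, smul_eq_mul]
    ring
  · have hrescale : ContDiffAt ℝ ∞ (fun q : ℝ × ℝ => (q.1, q.2 / 2)) q := by fun_prop
    exact ((contDiffAt_heatSeries 1 (hflat hq)).comp q hrescale).contDiffWithinAt
  · have htime := (hasDerivAt_heatSeries_succ_right 0 x (hflat ht)).scomp t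
      ((hasDerivAt_id t).div_const 2)
    rw [deriv_deriv_heatSeries_one_left x (hflat ht)]
    exact htime.deriv
  · have hhalf : Tendsto (fun t : ℝ => t / 2) (𝓝[>] 0) (𝓝[>] 0) :=
      tendsto_nhdsWithin_iff.2 ⟨tendsto_nhdsWithin_of_tendsto_nhds
        (by simpa using (continuous_id.div_const (2 : ℝ)).tendsto 0),
        eventually_mem_nhdsWithin.mono fun _ ht => mem_Ioi.2 (half_pos ht)⟩
    exact (tendsto_heatSeries_flatF_nhdsGT_zero 1 x).comp hhalf
  · obtain ⟨x, hx⟩ := exists_heatSeries_one_ne_zero (hflat two_pos) (by simp [flatF])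
    exact ⟨x, 2, two_pos, hx⟩
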